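/- Let λ > 0, t > 0 and F ∈ [0,1) be real numbers, and define g(t₁, t₂, t₃) = λ·( 2t₁/(3(2F+1)) + 2t₂/(3(2−2F)) − ((t₁−t₂)/3)² / ((2F+1)t₁/6 + (2−2F)t₂/6 + t₃) ) for t₁, t₂, t₃ ≥ 0 with t₁ + t₂ + t₃ = t. Then the maximum of g over this simplex equals max( 6λt/((2F+1)(2−2F)(√(2F+1)+√(2−2F))²) , 4λt/((2−2F)(√6+√(2−2F))²) ). -/

import Mathlib

/-- The Fisher information `g(t₁,t₂,t₃)` for the fidelity `F` when times `t₁, t₂, t₃` are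
allocated to coincidence, anti-coincidence and total-flux counting (total flux `λ` unknown). -/
noncomputable def fisherInfo (lam F t₁ t₂ t₃ : ℝ) : ℝ :=
  lam * (2 * t₁ / (3 * (2 * F + 1)) + 2 * t₂ / (3 * (2 - 2 * F)) -
    ((t₁ - t₂) / 3) ^ 2 /
      ((2 * F + 1) * t₁ / 6 + (2 - 2 * F) * t₂ / 6 + t₃))

/-!
Per unit flux, the counts in channel `i` carry `t i * r i * (x i) ^ 2` about `F`, where `r i` is the
rate and `x i = ∂_F log (r i)` the score. Not knowing the flux replaces the second moment of the
scores, under the weights `t i * r i`, by their variance. A variance is at most the second moment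
about any point `c`, which for the total time `T` is at most `T * V` as soon as
`|x i - c| ≤ √(V / r i)` for all `i`. By Helly's theorem on the line such a `c` exists once these
intervals intersect pairwise, and the least `V` for which two of them intersect is the optimum using
only these two channels. So the best allocation never needs more than two channels, and the maximum
is the largest of the pairwise optima.
-/

/-- For independent Poisson counts, channel `i` being observed for a time `t i` at mean rate
`Λ * r i`, the Fisher information, divided by `Λ`, about a parameter `θ` when the common flux `Λ` is
an unknown nuisance parameter. Here `x i` is the score `∂_θ log (r i)`. -/
noncomputable def profileInfo {ι : Type*} [Fintype ι] (r x t : ι → ℝ) : ℝ :=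
  ∑ i, t i * r i * x i ^ 2 - (∑ i, t i * r i * x i) ^ 2 / ∑ i, t i * r i

/-- The largest information per unit time (and unit flux) that channels `i` and `j` alone can give,
attained at `pairAllocation`. -/
noncomputable def pairInfo {ι : Type*} (r x : ι → ℝ) (i j : ι) : ℝ :=
  ((x i - x j) / ((√(r i))⁻¹ + (√(r j))⁻¹)) ^ 2

/-- The optimal division of the time `T` between channels `i` and `j`, inversely proportional to
the square roots of their rates; for `i = j` it spends the time `T` on that channel. -/
noncomputable def pairAllocation {ι : Type*} [DecidableEq ι] (r : ι → ℝ) (T : ℝ) (i j : ι) :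
    ι → ℝ :=
  Pi.single i (T * √(r j) / (√(r i) + √(r j))) + Pi.single j (T * √(r i) / (√(r i) + √(r j)))

section PairInfo

variable {ι : Type*}

theorem pairInfo_self (r x : ι → ℝ) (i : ι) : pairInfo r x i i = 0 := by
  simp [pairInfo]

theorem pairInfo_comm (r x : ι → ℝ) (i j : ι) : pairInfo r x i j = pairInfo r x j i := by
  rw [pairInfo, pairInfo, add_comm (√(r i))⁻¹, ← neg_sub, neg_div, neg_sq]

theorem pairInfo_nonneg (r x : ι → ℝ) (i j : ι) : 0 ≤ pairInfo r x i j :=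
  sq_nonneg _

theorem pairInfo_eq_div {r : ι → ℝ} (hr : ∀ i, 0 < r i) (x : ι → ℝ) (i j : ι) :
    pairInfo r x i j = r i * r j * (x i - x j) ^ 2 / (√(r i) + √(r j)) ^ 2 := by
  have hi : √(r i) ≠ 0 := (Real.sqrt_pos.mpr (hr i)).ne'
  have hj : √(r j) ≠ 0 := (Real.sqrt_pos.mpr (hr j)).ne'
  rw [pairInfo, inv_add_inv hi hj, div_div_eq_mul_div, div_pow, mul_pow, mul_pow,
    Real.sq_sqrt (hr i).le, Real.sq_sqrt (hr j).le, mul_comm]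

theorem isGreatest_range_pairInfo_fin_three (r x : Fin 3 → ℝ) :
    IsGreatest (Set.range (Function.uncurry (pairInfo r x)))
      (max (max (pairInfo r x 0 1) (pairInfo r x 1 2)) (pairInfo r x 0 2)) := by
  constructor
  · rcases max_choice (max (pairInfo r x 0 1) (pairInfo r x 1 2)) (pairInfo r x 0 2) with h | h
    · rcases max_choice (pairInfo r x 0 1) (pairInfo r x 1 2) with h' | h'
      · exact ⟨(0, 1), by rw [h, h', Function.uncurry_apply_pair]⟩
      · exact ⟨(1, 2), by rw [h, h', Function.uncurry_apply_pair]⟩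
    · exact ⟨(0, 2), by rw [h, Function.uncurry_apply_pair]⟩
  · rintro _ ⟨⟨i, j⟩, rfl⟩
    fin_cases i <;> fin_cases j <;>
      simp [pairInfo_self, pairInfo_comm r x 1 0, pairInfo_comm r x 2 0, pairInfo_comm r x 2 1,
        pairInfo_nonneg]

end PairInfo

section UpperBound

variable {ι : Type*}

theorem exists_forall_abs_sub_le [Nonempty ι] {x ρ : ι → ℝ}
    (h : ∀ i j, x i - x j ≤ ρ i + ρ j) : ∃ c, ∀ i, |x i - c| ≤ ρ i := by
  have hle : ∀ a ∈ Set.range (x - ρ), ∀ b ∈ Set.range (x + ρ), a ≤ b := by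
    rintro _ ⟨i, rfl⟩ _ ⟨j, rfl⟩
    simp only [Pi.sub_apply, Pi.add_apply]
    linarith [h i j]
  obtain ⟨c, hlower, hupper⟩ :=
    exists_between_of_forall_le (Set.range_nonempty _) (Set.range_nonempty _) hle
  exact ⟨c, fun i ↦ abs_sub_le_iff.mpr
    ⟨sub_le_comm.mp (hlower ⟨i, rfl⟩), sub_le_iff_le_add'.mpr (hupper ⟨i, rfl⟩)⟩⟩

theorem exists_forall_mul_sub_sq_le [Nonempty ι] {r x : ι → ℝ} {V : ℝ} (hr : ∀ i, 0 < r i)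
    (hV : ∀ i j, pairInfo r x i j ≤ V) : ∃ c, ∀ i, r i * (x i - c) ^ 2 ≤ V := by
  have hV₀ : 0 ≤ V :=
    let i := Classical.arbitrary ι
    (pairInfo_nonneg r x i i).trans (hV i i)
  have hinv (i : ι) : 0 < (√(r i))⁻¹ := inv_pos.mpr (Real.sqrt_pos.mpr (hr i))
  have hpair (i j : ι) : x i - x j ≤ √V * (√(r i))⁻¹ + √V * (√(r j))⁻¹ := by
    rw [← mul_add, ← div_le_iff₀ (add_pos (hinv i) (hinv j))]
    exact Real.le_sqrt_of_sq_le (hV i j)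
  obtain ⟨c, hc⟩ := exists_forall_abs_sub_le hpair
  refine ⟨c, fun i ↦ ?_⟩
  calc r i * (x i - c) ^ 2 ≤ r i * (√V * (√(r i))⁻¹) ^ 2 :=
        mul_le_mul_of_nonneg_left (sq_le_sq.mpr ((hc i).trans (le_abs_self _))) (hr i).le
    _ = V := by
        rw [mul_pow, inv_pow, Real.sq_sqrt hV₀, Real.sq_sqrt (hr i).le, mul_comm V,
          mul_inv_cancel_left₀ (hr i).ne']

variable [Fintype ι]

theorem profileInfo_le_sum_mul_sub_sq {r x t : ι → ℝ} (h : 0 < ∑ i, t i * r i) (c : ℝ) :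
    profileInfo r x t ≤ ∑ i, t i * r i * (x i - c) ^ 2 := by
  have hexpand : ∑ i, t i * r i * (x i - c) ^ 2 =
      ∑ i, t i * r i * x i ^ 2 - 2 * c * ∑ i, t i * r i * x i + c ^ 2 * ∑ i, t i * r i := by
    simp only [Finset.mul_sum, ← Finset.sum_sub_distrib, ← Finset.sum_add_distrib]
    exact Finset.sum_congr rfl fun i _ ↦ by ring
  have htangent : 2 * c * ∑ i, t i * r i * x i - c ^ 2 * ∑ i, t i * r i ≤
      (∑ i, t i * r i * x i) ^ 2 / ∑ i, t i * r i := by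
    rw [le_div_iff₀ h]
    linarith [sq_nonneg (∑ i, t i * r i * x i - c * ∑ i, t i * r i)]
  rw [profileInfo, hexpand]
  linarith

theorem profileInfo_le_sum_mul [Nonempty ι] {r x t : ι → ℝ} {V : ℝ} (hr : ∀ i, 0 < r i)
    (ht : 0 ≤ t) (hsum : 0 < ∑ i, t i) (hV : ∀ i j, pairInfo r x i j ≤ V) :
    profileInfo r x t ≤ (∑ i, t i) * V := by
  have hcounts : 0 < ∑ i, t i * r i := by
    obtain ⟨i, hi, hti⟩ := (Finset.sum_pos_iff_of_nonneg fun i _ ↦ ht i).mp hsum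
    exact Finset.sum_pos' (fun i _ ↦ mul_nonneg (ht i) (hr i).le) ⟨i, hi, mul_pos hti (hr i)⟩
  obtain ⟨c, hc⟩ := exists_forall_mul_sub_sq_le hr hV
  calc profileInfo r x t ≤ ∑ i, t i * r i * (x i - c) ^ 2 :=
        profileInfo_le_sum_mul_sub_sq hcounts c
    _ ≤ ∑ i, t i * V := Finset.sum_le_sum fun i _ ↦ by
        rw [mul_assoc]
        exact mul_le_mul_of_nonneg_left (hc i) (ht i)
    _ = (∑ i, t i) * V := (Finset.sum_mul ..).symm

end UpperBound

section Attainment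

variable {ι : Type*}

theorem pairAllocation_nonneg [DecidableEq ι] (r : ι → ℝ) {T : ℝ} (hT : 0 ≤ T) (i j : ι) :
    0 ≤ pairAllocation r T i j :=
  add_nonneg (Pi.single_nonneg.mpr (by positivity)) (Pi.single_nonneg.mpr (by positivity))

variable [Fintype ι]

theorem sum_pairAllocation_mul [DecidableEq ι] (r : ι → ℝ) (T : ℝ) (i j : ι) (f : ι → ℝ) :
    ∑ k, pairAllocation r T i j k * f k =
      T * (√(r j) * f i + √(r i) * f j) / (√(r i) + √(r j)) := by
  simp only [pairAllocation, Pi.add_apply, add_mul, Finset.sum_add_distrib, Pi.single_apply,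
    ite_mul, zero_mul, Finset.sum_ite_eq', Finset.mem_univ, if_true]
  ring

theorem sum_pairAllocation [DecidableEq ι] {r : ι → ℝ} (hr : ∀ i, 0 < r i) (T : ℝ) (i j : ι) :
    ∑ k, pairAllocation r T i j k = T := by
  have hpos : 0 < √(r i) + √(r j) :=
    add_pos (Real.sqrt_pos.mpr (hr i)) (Real.sqrt_pos.mpr (hr j))
  have hsum := sum_pairAllocation_mul r T i j 1
  simp only [Pi.one_apply, mul_one] at hsum
  rw [hsum, add_comm (√(r j)), mul_div_cancel_right₀ _ hpos.ne']

theorem profileInfo_pairAllocation [DecidableEq ι] {r : ι → ℝ} (hr : ∀ i, 0 < r i) (x : ι → ℝ)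
    (T : ℝ) (i j : ι) :
    profileInfo r x (pairAllocation r T i j) = T * pairInfo r x i j := by
  have hi : 0 < √(r i) := Real.sqrt_pos.mpr (hr i)
  have hj : 0 < √(r j) := Real.sqrt_pos.mpr (hr j)
  simp only [profileInfo, mul_assoc, sum_pairAllocation_mul r T i j fun k ↦ r k * x k ^ 2,
    sum_pairAllocation_mul r T i j fun k ↦ r k * x k, sum_pairAllocation_mul r T i j r, pairInfo]
  rw [← Real.sq_sqrt (hr i).le, ← Real.sq_sqrt (hr j).le, Real.sqrt_sq hi.le, Real.sqrt_sq hj.le]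
  field_simp
  ring

theorem isGreatest_profileInfo [Nonempty ι] {r x : ι → ℝ} {T V : ℝ} (hr : ∀ i, 0 < r i)
    (hT : 0 < T) (hV : IsGreatest (Set.range (Function.uncurry (pairInfo r x))) V) :
    IsGreatest (profileInfo r x '' {t | 0 ≤ t ∧ ∑ i, t i = T}) (T * V) := by
  classical
  obtain ⟨⟨⟨i, j⟩, hij⟩, hle⟩ := hV
  constructor
  · refine ⟨pairAllocation r T i j,
      ⟨pairAllocation_nonneg r hT.le i j, sum_pairAllocation hr T i j⟩, ?_⟩
    rw [profileInfo_pairAllocation hr, ← hij, Function.uncurry_apply_pair]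
  · rintro _ ⟨t, ⟨ht, rfl⟩, rfl⟩
    exact profileInfo_le_sum_mul hr ht hT fun i j ↦ hle ⟨(i, j), rfl⟩

end Attainment

theorem sqrt_div_add_one {a b : ℝ} (ha : 0 ≤ a) (hb : 0 < b) :
    √(a / b) + 1 = (√b + √a) / √b := by
  rw [Real.sqrt_div ha, add_div, div_self (Real.sqrt_pos.mpr hb).ne', add_comm]

section FidelityChannels

/-- The rates per unit flux of coincidence (`0`), anti-coincidence (`1`) and total-flux (`2`)
counting at fidelity `F`. -/
noncomputable def fidelityRate (F : ℝ) : Fin 3 → ℝ :=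
  ![(2 * F + 1) / 6, (2 - 2 * F) / 6, 1]

/-- The scores `∂_F log (fidelityRate F i)`. -/
noncomputable def fidelityScore (F : ℝ) : Fin 3 → ℝ :=
  ![2 / (2 * F + 1), -2 / (2 - 2 * F), 0]

variable {F : ℝ} (hF : F ∈ Set.Ioo (-1 / 2 : ℝ) 1)
include hF

theorem two_mul_add_one_pos : 0 < 2 * F + 1 := by
  linarith [hF.1]

theorem two_sub_two_mul_pos : 0 < 2 - 2 * F := by
  linarith [hF.2]

theorem fidelityRate_pos (i : Fin 3) : 0 < fidelityRate F i := by
  fin_cases i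
  · exact div_pos (two_mul_add_one_pos hF) (by norm_num)
  · exact div_pos (two_sub_two_mul_pos hF) (by norm_num)
  · exact one_pos

theorem fisherInfo_eq_mul_profileInfo (lam : ℝ) (τ : Fin 3 → ℝ) :
    fisherInfo lam F (τ 0) (τ 1) (τ 2) =
      lam * profileInfo (fidelityRate F) (fidelityScore F) τ := by
  have ha : 2 * F + 1 ≠ 0 := (two_mul_add_one_pos hF).ne'
  have hb : 1 - F ≠ 0 := (sub_pos.mpr hF.2).ne'
  have hcounts : ∑ i, τ i * fidelityRate F i =
      (2 * F + 1) * τ 0 / 6 + (2 - 2 * F) * τ 1 / 6 + τ 2 := by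
    simp only [Fin.sum_univ_three, fidelityRate, Matrix.cons_val]
    ring
  have hfirst : ∑ i, τ i * fidelityRate F i * fidelityScore F i = (τ 0 - τ 1) / 3 := by
    simp only [Fin.sum_univ_three, fidelityRate, fidelityScore, Matrix.cons_val]
    field_simp
    ring
  have hsecond : ∑ i, τ i * fidelityRate F i * fidelityScore F i ^ 2 =
      2 * τ 0 / (3 * (2 * F + 1)) + 2 * τ 1 / (3 * (2 - 2 * F)) := by
    simp only [Fin.sum_univ_three, fidelityRate, fidelityScore, Matrix.cons_val]
    field_simp
    ring
  rw [fisherInfo, profileInfo, hcounts, hfirst, hsecond]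

theorem setOf_fisherInfo_eq_image (lam t : ℝ) :
    {y : ℝ | ∃ t₁ t₂ t₃ : ℝ, 0 ≤ t₁ ∧ 0 ≤ t₂ ∧ 0 ≤ t₃ ∧
        t₁ + t₂ + t₃ = t ∧ y = fisherInfo lam F t₁ t₂ t₃} =
      (lam * ·) '' (profileInfo (fidelityRate F) (fidelityScore F) ''
        {τ | 0 ≤ τ ∧ ∑ i, τ i = t}) := by
  rw [Set.image_image]
  ext y
  constructor
  · rintro ⟨t₁, t₂, t₃, h₁, h₂, h₃, hsum, rfl⟩
    have hnonneg : 0 ≤ ![t₁, t₂, t₃] := fun i ↦ by fin_cases i <;> assumption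
    exact ⟨![t₁, t₂, t₃], ⟨hnonneg, (Fin.sum_univ_three _).trans hsum⟩,
      (fisherInfo_eq_mul_profileInfo hF lam ![t₁, t₂, t₃]).symm⟩
  · rintro ⟨τ, ⟨hτ, hsum⟩, rfl⟩
    exact ⟨τ 0, τ 1, τ 2, hτ 0, hτ 1, hτ 2, (Fin.sum_univ_three τ).symm.trans hsum,
      (fisherInfo_eq_mul_profileInfo hF lam τ).symm⟩

theorem pairInfo_coincidence_antiCoincidence :
    pairInfo (fidelityRate F) (fidelityScore F) 0 1 =
      6 / ((2 * F + 1) * (2 - 2 * F) * (√(2 * F + 1) + √(2 - 2 * F)) ^ 2) := by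
  have ha := two_mul_add_one_pos hF
  have hb := two_sub_two_mul_pos hF
  have hb' : 1 - F ≠ 0 := (sub_pos.mpr hF.2).ne'
  have hscore : 2 / (2 * F + 1) - -2 / (2 - 2 * F) = 6 / ((2 * F + 1) * (2 - 2 * F)) := by
    field_simp
    ring
  have hsqrt : √((2 * F + 1) / 6) + √((2 - 2 * F) / 6) =
      (√(2 * F + 1) + √(2 - 2 * F)) / √6 := by
    rw [Real.sqrt_div ha.le, Real.sqrt_div hb.le, add_div]
  rw [pairInfo_eq_div (fidelityRate_pos hF)]
  simp only [fidelityRate, fidelityScore, Matrix.cons_val]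
  rw [hscore, hsqrt, div_pow _ √6, Real.sq_sqrt (by norm_num)]
  field_simp

theorem pairInfo_antiCoincidence_flux :
    pairInfo (fidelityRate F) (fidelityScore F) 1 2 =
      4 / ((2 - 2 * F) * (√6 + √(2 - 2 * F)) ^ 2) := by
  have hb := two_sub_two_mul_pos hF
  have hb' : 1 - F ≠ 0 := (sub_pos.mpr hF.2).ne'
  rw [pairInfo_eq_div (fidelityRate_pos hF)]
  simp only [fidelityRate, fidelityScore, Matrix.cons_val, Real.sqrt_one]
  rw [sqrt_div_add_one hb.le (by norm_num), div_pow _ √6, Real.sq_sqrt (by norm_num)]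
  field_simp
  norm_num

theorem pairInfo_coincidence_flux :
    pairInfo (fidelityRate F) (fidelityScore F) 0 2 =
      4 / ((2 * F + 1) * (√6 + √(2 * F + 1)) ^ 2) := by
  have ha := two_mul_add_one_pos hF
  rw [pairInfo_eq_div (fidelityRate_pos hF)]
  simp only [fidelityRate, fidelityScore, Matrix.cons_val, Real.sqrt_one]
  rw [sqrt_div_add_one ha.le (by norm_num), div_pow _ √6, Real.sq_sqrt (by norm_num)]
  field_simp
  norm_num

end FidelityChannels

theorem coincidence_flux_le_coincidence_antiCoincidence {lam t F : ℝ} (hlam : 0 ≤ lam)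
    (ht : 0 ≤ t) (hF : F ∈ Set.Ico (0 : ℝ) 1) :
    4 * lam * t / ((2 * F + 1) * (√6 + √(2 * F + 1)) ^ 2) ≤
      6 * lam * t / ((2 * F + 1) * (2 - 2 * F) * (√(2 * F + 1) + √(2 - 2 * F)) ^ 2) := by
  have ha : 1 ≤ 2 * F + 1 := by linarith [hF.1]
  have hb : 0 < 2 - 2 * F := by linarith [hF.2]
  have ha_sq : √(2 * F + 1) ^ 2 = 2 * F + 1 := Real.sq_sqrt (by linarith)
  have hb_sq : √(2 - 2 * F) ^ 2 = 2 - 2 * F := Real.sq_sqrt hb.le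
  have hpair : (2 - 2 * F) * (√(2 * F + 1) + √(2 - 2 * F)) ^ 2 ≤ 2 * 6 := by
    have hsq : (√(2 * F + 1) + √(2 - 2 * F)) ^ 2 ≤ 6 := by
      linarith [add_sq_le (a := √(2 * F + 1)) (b := √(2 - 2 * F))]
    exact mul_le_mul (by linarith [hF.1]) hsq (sq_nonneg _) two_pos.le
  have hflux : 3 ^ 2 ≤ (√6 + √(2 * F + 1)) ^ 2 := by
    have h₂ : 2 ≤ √6 := Real.le_sqrt_of_sq_le (by norm_num)
    have h₁ : 1 ≤ √(2 * F + 1) := Real.one_le_sqrt.mpr ha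
    exact pow_le_pow_left₀ (by norm_num) (by linarith) 2
  have hnonneg : 0 ≤ lam * t * (2 * F + 1) := by positivity
  rw [div_le_div_iff₀ (by positivity) (by positivity)]
  calc 4 * lam * t * ((2 * F + 1) * (2 - 2 * F) * (√(2 * F + 1) + √(2 - 2 * F)) ^ 2)
      = 4 * (lam * t * (2 * F + 1)) *
          ((2 - 2 * F) * (√(2 * F + 1) + √(2 - 2 * F)) ^ 2) := by ring
    _ ≤ 4 * (lam * t * (2 * F + 1)) * (2 * 6) := by gcongr
    _ ≤ 6 * (lam * t * (2 * F + 1)) * 3 ^ 2 := by linarith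
    _ ≤ 6 * (lam * t * (2 * F + 1)) * (√6 + √(2 * F + 1)) ^ 2 := by gcongr
    _ = 6 * lam * t * ((2 * F + 1) * (√6 + √(2 * F + 1)) ^ 2) := by ring

-- The third term, the optimum using only coincidence and total flux, is the largest for `F` near
-- `-1 / 2`.
theorem stmt7_general {lam t F : ℝ} (hlam : 0 ≤ lam) (ht : 0 < t)
    (hF : F ∈ Set.Ioo (-1 / 2 : ℝ) 1) :
    IsGreatest {y : ℝ | ∃ t₁ t₂ t₃ : ℝ, 0 ≤ t₁ ∧ 0 ≤ t₂ ∧ 0 ≤ t₃ ∧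
        t₁ + t₂ + t₃ = t ∧ y = fisherInfo lam F t₁ t₂ t₃}
      (max
        (max
          (6 * lam * t /
            ((2 * F + 1) * (2 - 2 * F) * (√(2 * F + 1) + √(2 - 2 * F)) ^ 2))
          (4 * lam * t / ((2 - 2 * F) * (√6 + √(2 - 2 * F)) ^ 2)))
        (4 * lam * t / ((2 * F + 1) * (√6 + √(2 * F + 1)) ^ 2))) := by
  have hmax := (monotone_mul_left_of_nonneg hlam).map_isGreatest <|
    isGreatest_profileInfo (fidelityRate_pos hF) ht <|
      isGreatest_range_pairInfo_fin_three (fidelityRate F) (fidelityScore F)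
  have hscale (k D : ℝ) : k * lam * t / D = lam * t * (k / D) := by ring
  rw [setOf_fisherInfo_eq_image hF, hscale 6, hscale 4, hscale 4,
    ← pairInfo_coincidence_antiCoincidence hF, ← pairInfo_antiCoincidence_flux hF,
    ← pairInfo_coincidence_flux hF, ← mul_max_of_nonneg _ _ (mul_nonneg hlam ht.le),
    ← mul_max_of_nonneg _ _ (mul_nonneg hlam ht.le), mul_assoc]
  exact hmax

/-- For `λ, t > 0` and `F ∈ [0,1)`, the maximum of the Fisher information `g`
over the simplex `{t₁,t₂,t₃ ≥ 0, t₁+t₂+t₃ = t}` equals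
`max( 6λt/((2F+1)(2−2F)(√(2F+1)+√(2−2F))²), 4λt/((2−2F)(√6+√(2−2F))²) )`. -/
theorem stmt7 (lam t F : ℝ) (hlam : 0 < lam) (ht : 0 < t)
    (hF : F ∈ Set.Ico (0 : ℝ) 1) :
    IsGreatest {y : ℝ | ∃ t₁ t₂ t₃ : ℝ, 0 ≤ t₁ ∧ 0 ≤ t₂ ∧ 0 ≤ t₃ ∧
        t₁ + t₂ + t₃ = t ∧ y = fisherInfo lam F t₁ t₂ t₃}
      (max
        (6 * lam * t /
          ((2 * F + 1) * (2 - 2 * F) *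
            (Real.sqrt (2 * F + 1) + Real.sqrt (2 - 2 * F)) ^ 2))
        (4 * lam * t /
          ((2 - 2 * F) * (Real.sqrt 6 + Real.sqrt (2 - 2 * F)) ^ 2))) := by
  rw [← max_eq_left (le_max_of_le_left
    (coincidence_flux_le_coincidence_antiCoincidence hlam.le ht.le hF))]
  exact stmt7_general hlam.le ht (Set.Ico_subset_Ioo_left (by norm_num) hF)
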